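/- arXiv:1502.04364 — 2 statements merged into one kernel-verified Lean document; each statement's English description precedes it below -/
import Mathlib

section
/- Suppose the directed graph G is strongly connected. Let δ̄ = max_{i∈V} max(δ_{i,in}, δ_{i,out}), let r = max{ Re(λ) : λ a nonzero eigenvalue of M(0) } (which is negative), and set τ̃ = (1/(2δ̄))·arctan(−r/δ̄). Then for every delay τ with 0 < τ < τ̃ there exists ε̃ > 0 such that for all ε ∈ (0, ε̃] the following holds: every continuous function y = (x,z) : [−τ,∞) → ℝ^n × ℝ^n that is differentiable on (0,∞), satisfies ẏ(t) = M(ε)·y(t−τ) for all t > 0, and satisfies y(θ) = (x₀, 0) for all θ ∈ [−τ, 0], has lim_{t→∞} x(t) = ((𝟙ᵀx₀)/n)·𝟙, where 𝟙 is the all-ones vector in ℝ^n. -/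
open Matrix Complex Filter

noncomputable section

/-- Adjacency matrix of a directed graph on `n` nodes with edge relation `E`. -/
def adjM (n : ℕ) (E : Fin n → Fin n → Prop) [DecidableRel E] :
    Matrix (Fin n) (Fin n) ℝ := fun i j => if E i j then 1 else 0

/-- In-degree of node `i`. -/
def degIn (n : ℕ) (E : Fin n → Fin n → Prop) [DecidableRel E] (i : Fin n) : ℝ :=
  ∑ j, adjM n E i j

/-- Out-degree of node `i`. -/
def degOut (n : ℕ) (E : Fin n → Fin n → Prop) [DecidableRel E] (i : Fin n) : ℝ :=
  ∑ j, adjM n E j i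

/-- In-Laplacian `L_in = D_in − A`. -/
def Lin (n : ℕ) (E : Fin n → Fin n → Prop) [DecidableRel E] :
    Matrix (Fin n) (Fin n) ℝ := Matrix.diagonal (degIn n E) - adjM n E

/-- Out-Laplacian `L_out = D_out − A`. -/
def Lout (n : ℕ) (E : Fin n → Fin n → Prop) [DecidableRel E] :
    Matrix (Fin n) (Fin n) ℝ := Matrix.diagonal (degOut n E) - adjM n E

/-- The block matrix `M(ε) = [[−L_in, εI],[L_in, −L_out − εI]]`. -/
def Mmat (n : ℕ) (E : Fin n → Fin n → Prop) [DecidableRel E] (ε : ℝ) :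
    Matrix (Fin n ⊕ Fin n) (Fin n ⊕ Fin n) ℝ :=
  Matrix.fromBlocks (-(Lin n E)) (ε • (1 : Matrix (Fin n) (Fin n) ℝ))
    (Lin n E) (-(Lout n E) - ε • (1 : Matrix (Fin n) (Fin n) ℝ))

/-- `M(ε)` viewed as a complex matrix. -/
def MmatC (n : ℕ) (E : Fin n → Fin n → Prop) [DecidableRel E] (ε : ℝ) :
    Matrix (Fin n ⊕ Fin n) (Fin n ⊕ Fin n) ℂ :=
  (Mmat n E ε).map (Complex.ofReal)

/-- A directed graph is strongly connected if every ordered pair of distinct nodes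
is joined by a directed path. -/
def StronglyConnected (n : ℕ) (E : Fin n → Fin n → Prop) : Prop :=
  ∀ i j : Fin n, i ≠ j → Relation.TransGen E i j

/-! ### Part I: the scalar delay equation -/

/-- Extension of a continuous function on `[0,1]` to the real line. -/
def ddExt (φ : C(Set.Icc (0:ℝ) 1, ℂ)) : ℝ → ℂ := Set.IccExtend (zero_le_one' ℝ) φ

lemma ddExt_cont (φ : C(Set.Icc (0:ℝ) 1, ℂ)) : Continuous (ddExt φ) :=
  φ.continuous.Icc_extend'

lemma ddExt_of_mem (φ : C(Set.Icc (0:ℝ) 1, ℂ)) {t : ℝ} (ht : t ∈ Set.Icc (0:ℝ) 1) :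
    ddExt φ t = φ ⟨t, ht⟩ := Set.IccExtend_of_mem _ _ ht

lemma ddExt_norm_le (φ : C(Set.Icc (0:ℝ) 1, ℂ)) (t : ℝ) : ‖ddExt φ t‖ ≤ ‖φ‖ :=
  φ.norm_coe_le_norm _

lemma ddExt_add (φ ψ : C(Set.Icc (0:ℝ) 1, ℂ)) (t : ℝ) :
    ddExt (φ + ψ) t = ddExt φ t + ddExt ψ t := rfl

lemma ddExt_smul (c : ℂ) (φ : C(Set.Icc (0:ℝ) 1, ℂ)) (t : ℝ) :
    ddExt (c • φ) t = c * ddExt φ t := rfl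

/-- Primitive of the extension. -/
def ddPrim (φ : C(Set.Icc (0:ℝ) 1, ℂ)) (t : ℝ) : ℂ := ∫ u in (0:ℝ)..t, ddExt φ u

lemma ddPrim_deriv (φ : C(Set.Icc (0:ℝ) 1, ℂ)) (t : ℝ) :
    HasDerivAt (ddPrim φ) (ddExt φ t) t :=
  (ddExt_cont φ).integral_hasStrictDerivAt 0 t |>.hasDerivAt

lemma ddPrim_zero (φ : C(Set.Icc (0:ℝ) 1, ℂ)) : ddPrim φ 0 = 0 := by simp [ddPrim]

lemma ddPrim_cont (φ : C(Set.Icc (0:ℝ) 1, ℂ)) : Continuous (ddPrim φ) :=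
  continuous_iff_continuousAt.2 fun t => (ddPrim_deriv φ t).continuousAt

/-- One-period solution operator of the scalar delay equation, as a linear map. -/
def ddTlin (κ : ℂ) : C(Set.Icc (0:ℝ) 1, ℂ) →ₗ[ℂ] C(Set.Icc (0:ℝ) 1, ℂ) where
  toFun φ := ⟨fun θ => ddExt φ 1 + κ * ddPrim φ θ,
    continuous_const.add (continuous_const.mul ((ddPrim_cont φ).comp continuous_subtype_val))⟩
  map_add' φ ψ := by
    ext θ
    have : ddPrim (φ + ψ) θ = ddPrim φ θ + ddPrim ψ θ := by
      unfold ddPrim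
      simp only [ddExt_add]
      exact intervalIntegral.integral_add ((ddExt_cont φ).intervalIntegrable _ _)
        ((ddExt_cont ψ).intervalIntegrable _ _)
    simp [this, ddExt_add]; ring
  map_smul' c φ := by
    ext θ
    have : ddPrim (c • φ) θ = c * ddPrim φ θ := by
      unfold ddPrim
      simp only [ddExt_smul]
      exact intervalIntegral.integral_const_mul _ _
    simp [this, ddExt_smul]; ring

/-- One-period solution operator of the scalar delay equation. -/
def ddT (κ : ℂ) : C(Set.Icc (0:ℝ) 1, ℂ) →L[ℂ] C(Set.Icc (0:ℝ) 1, ℂ) :=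
  (ddTlin κ).mkContinuous (1 + ‖κ‖) (by
    intro φ
    rw [ContinuousMap.norm_le _ (by positivity)]
    intro θ
    have h1 : ‖ddPrim φ θ‖ ≤ ‖φ‖ * |(θ:ℝ) - 0| :=
      intervalIntegral.norm_integral_le_of_norm_le_const (fun x _ => ddExt_norm_le φ x)
    have h2 : |(θ:ℝ) - 0| ≤ 1 := by
      rw [abs_le]; constructor <;> linarith [θ.2.1, θ.2.2]
    have h3 : ‖ddPrim φ θ‖ ≤ ‖φ‖ := h1.trans (mul_le_of_le_one_right (norm_nonneg _) h2)
    calc ‖ddExt φ 1 + κ * ddPrim φ θ‖ ≤ ‖ddExt φ 1‖ + ‖κ‖ * ‖ddPrim φ θ‖ := by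
          rw [← norm_mul]; exact norm_add_le _ _
      _ ≤ ‖φ‖ + ‖κ‖ * ‖φ‖ := by
          gcongr
          exact ddExt_norm_le φ 1
      _ = (1 + ‖κ‖) * ‖φ‖ := by ring)

lemma ddT_apply (κ : ℂ) (φ : C(Set.Icc (0:ℝ) 1, ℂ)) (θ : Set.Icc (0:ℝ) 1) :
    ddT κ φ θ = ddExt φ 1 + κ * ddPrim φ θ := rfl

lemma ddT_resolvent (κ : ℂ) (h : ∀ σ : ℂ, 0 ≤ σ.re → σ ≠ κ * Complex.exp (-σ))
    (μ : ℂ) (hμ : 1 ≤ ‖μ‖) : IsUnit (algebraMap ℂ _ μ - ddT κ) := by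
  have hμ0 : μ ≠ 0 := by rintro rfl; norm_num at hμ
  set a : ℂ := κ / μ with ha
  have haμ : μ * a = κ := by rw [ha]; field_simp
  have hne : Complex.exp a ≠ μ := by
    intro he
    apply h a
    · have : ‖μ‖ = Real.exp a.re := by rw [← he, Complex.norm_exp]
      rw [this] at hμ
      exact Real.one_le_exp_iff.1 hμ |> fun h => h
    · rw [Complex.exp_neg, he, ha]; rfl
  have hexpd : ∀ (b : ℂ) (t : ℝ), HasDerivAt (fun t : ℝ => Complex.exp (b * t))
      (b * Complex.exp (b * t)) t := by
    intro b t
    have := ((Complex.ofRealCLM.hasDerivAt (x := t)).const_mul b).cexp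
    simpa [mul_comm] using this
  rw [ContinuousLinearMap.isUnit_iff_bijective]
  constructor
  · rw [injective_iff_map_eq_zero]
    intro φ hφ
    have key : ∀ t ∈ Set.Icc (0:ℝ) 1, μ * ddExt φ t = ddExt φ 1 + κ * ddPrim φ t := by
      intro t ht
      have := congrArg (fun ψ : C(Set.Icc (0:ℝ) 1, ℂ) => ψ ⟨t, ht⟩) hφ
      simp [Algebra.algebraMap_eq_smul_one, ddT_apply] at this
      rw [ddExt_of_mem φ ht]
      linear_combination this
    set c := ddExt φ 1 with hc
    let H : ℝ → ℂ := fun t => Complex.exp (-a * t) * (c + κ * ddPrim φ t)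
    have hH : ∀ t ∈ Set.Icc (0:ℝ) 1, HasDerivAt H 0 t := by
      intro t ht
      have h1 := (hexpd (-a) t).mul (((ddPrim_deriv φ t).const_mul κ).const_add c)
      refine HasDerivAt.congr_deriv (f := H) h1 ?_
      have := key t ht
      rw [← this, ← haμ]; ring
    have hconst : ∀ t ∈ Set.Icc (0:ℝ) 1, H t = H 0 :=
      constant_of_has_deriv_right_zero
        (fun t ht => (hH t ht).continuousAt.continuousWithinAt)
        (fun t ht => (hH t ⟨ht.1, ht.2.le⟩).hasDerivWithinAt)
    have hH0 : H 0 = c := by simp [H, ddPrim_zero]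
    have hc0 : c = 0 := by
      by_contra hc0
      have h1 := hconst 1 (by simp)
      rw [hH0] at h1
      have h2 := key 1 (by simp)
      simp only [H] at h1
      rw [← h2, ← hc] at h1
      apply hne
      have h3 : Complex.exp (-a) * μ = 1 := by
        apply mul_right_cancel₀ hc0
        simp at h1
        linear_combination h1
      rw [Complex.exp_neg] at h3
      have := Complex.exp_ne_zero a
      field_simp at h3
      exact h3.symm
    ext θ
    have h1 := hconst θ θ.2
    rw [hH0, hc0] at h1
    have h2 := key θ θ.2
    simp only [H, hc0] at h1
    rw [hc0] at h2
    rw [← h2] at h1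
    rw [ddExt_of_mem φ θ.2] at h1
    simpa [hμ0, Complex.exp_ne_zero] using h1
  · intro g
    -- particular solution
    let G : ℝ → ℂ := fun t => ∫ u in (0:ℝ)..t, Complex.exp (-a * u) * ddExt g u
    have hGd : ∀ t : ℝ, HasDerivAt G (Complex.exp (-a * t) * ddExt g t) t := by
      intro t
      have hc : Continuous (fun u : ℝ => Complex.exp (-a * u) * ddExt g u) := by
        have := ddExt_cont g
        fun_prop
      exact (hc.integral_hasStrictDerivAt 0 t).hasDerivAt
    let p : ℝ → ℂ := fun t => (1 / μ) * (Complex.exp (a * t) * G t)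
    have hpd : ∀ t, HasDerivAt p (ddExt g t / μ + a * p t) t := by
      intro t
      have h1 := ((hexpd a t).mul (hGd t)).const_mul (1 / μ)
      refine HasDerivAt.congr_deriv (f := p) h1 ?_
      simp only [p]
      have : Complex.exp (a * t) * Complex.exp (-a * t) = 1 := by
        rw [← Complex.exp_add]; simp
      linear_combination (ddExt g t / μ) * this
    have hp0 : p 0 = 0 := by simp [p, G]
    have hpc : Continuous p := continuous_iff_continuousAt.2 fun t => (hpd t).continuousAt
    have hden : (1 - Complex.exp a / μ) ≠ 0 := by
      intro h0
      apply hne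
      field_simp at h0
      linear_combination -h0
    set c : ℂ := (ddExt g 1 / μ + a * p 1) / (1 - Complex.exp a / μ) with hc
    have hceq : c = (ddExt g 1 / μ + a * p 1) + c * Complex.exp a / μ := by
      have : c * (1 - Complex.exp a / μ) = (ddExt g 1 / μ + a * p 1) := by
        rw [hc]; field_simp
      linear_combination this
    have hfc : Continuous (fun t : ℝ => ddExt g t / μ + a * p t + c / μ * Complex.exp (a * t)) := by
      have := ddExt_cont g
      fun_prop
    let φ : C(Set.Icc (0:ℝ) 1, ℂ) :=
      ⟨fun θ => ddExt g θ / μ + a * p θ + c / μ * Complex.exp (a * (θ:ℝ)),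
        hfc.comp continuous_subtype_val⟩
    refine ⟨φ, ?_⟩
    have hφe : ∀ t ∈ Set.Icc (0:ℝ) 1,
        ddExt φ t = ddExt g t / μ + a * p t + c / μ * Complex.exp (a * t) := by
      intro t ht
      rw [ddExt_of_mem φ ht]; rfl
    have hφ1 : ddExt φ 1 = c := by
      rw [hφe 1 (by simp)]
      simp
      linear_combination -hceq
    have hprim : ∀ t ∈ Set.Icc (0:ℝ) 1,
        κ * ddPrim φ t = κ * p t + c * Complex.exp (a * t) - c := by
      let D : ℝ → ℂ := fun t => κ * ddPrim φ t - (κ * p t + c * Complex.exp (a * t) - c)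
      have hD : ∀ t ∈ Set.Icc (0:ℝ) 1, HasDerivAt D 0 t := by
        intro t ht
        have h1 := ((ddPrim_deriv φ t).const_mul κ).sub
          ((((hpd t).const_mul κ).add ((hexpd a t).const_mul c)).sub_const c)
        refine HasDerivAt.congr_deriv (f := D) h1 ?_
        rw [hφe t ht, ha]
        ring
      have hconst : ∀ t ∈ Set.Icc (0:ℝ) 1, D t = D 0 :=
        constant_of_has_deriv_right_zero
          (fun t ht => (hD t ht).continuousAt.continuousWithinAt)
          (fun t ht => (hD t ⟨ht.1, ht.2.le⟩).hasDerivWithinAt)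
      intro t ht
      have h1 := hconst t ht
      have h0 : D 0 = 0 := by simp [D, hp0, ddPrim_zero]
      rw [h0] at h1
      simp only [D] at h1
      linear_combination h1
    ext θ
    have h1 : (algebraMap ℂ (C(Set.Icc (0:ℝ) 1, ℂ) →L[ℂ] C(Set.Icc (0:ℝ) 1, ℂ)) μ - ddT κ) φ θ
        = μ * φ θ - ddT κ φ θ := by
      simp [Algebra.algebraMap_eq_smul_one]
    rw [h1, ddT_apply, hφ1, hprim θ θ.2]
    have h2 : φ θ = ddExt g θ / μ + a * p θ + c / μ * Complex.exp (a * (θ:ℝ)) := rfl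
    rw [h2, ddExt_of_mem g θ.2, ← haμ]
    field_simp
    ring

lemma dd_gelfand {X : Type*} [NormedAddCommGroup X] [NormedSpace ℂ X] [CompleteSpace X]
    [Nontrivial X] (T : X →L[ℂ] X)
    (h : ∀ μ : ℂ, 1 ≤ ‖μ‖ → IsUnit (algebraMap ℂ (X →L[ℂ] X) μ - T)) :
    ∃ m : ℕ, 0 < m ∧ ‖T ^ m‖ < 1 := by
  have h1 : spectralRadius ℂ T < ((1 : NNReal) : ENNReal) := by
    apply spectrum.spectralRadius_lt_of_forall_lt
    intro z hz
    by_contra hcon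
    push Not at hcon
    exact spectrum.mem_iff.1 hz (h z (by exact_mod_cast hcon))
  have h2 := spectrum.pow_nnnorm_pow_one_div_tendsto_nhds_spectralRadius T
  have h3 := (h2.eventually (gt_mem_nhds h1)).and (eventually_gt_atTop 0)
  obtain ⟨m, hm, hm0⟩ := h3.exists
  refine ⟨m, hm0, ?_⟩
  by_contra hcon
  push Not at hcon
  have h4 : (1 : ENNReal) ≤ (‖T ^ m‖₊ : ENNReal) := by exact_mod_cast hcon
  have h5 : (1 : ENNReal) ≤ (‖T ^ m‖₊ : ENNReal) ^ (1 / (m:ℝ)) :=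
    ENNReal.one_le_rpow h4 (by positivity)
  exact absurd hm (not_lt.2 (by simpa using h5))

lemma ddT_pow (κ : ℂ) (h : ∀ σ : ℂ, 0 ≤ σ.re → σ ≠ κ * Complex.exp (-σ)) :
    ∃ m : ℕ, 0 < m ∧ ‖(ddT κ) ^ m‖ < 1 :=
  dd_gelfand _ (ddT_resolvent κ h)

lemma dd_seq (a g : ℕ → ℝ) (m : ℕ) (hm : 0 < m) (q : ℝ) (hq0 : 0 ≤ q) (hq1 : q < 1)
    (ha : ∀ k, 0 ≤ a k) (hg : Tendsto g atTop (nhds 0))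
    (hrec : ∀ k, a (k + m) ≤ q * a k + g k) : Tendsto a atTop (nhds 0) := by
  rw [Metric.tendsto_atTop]
  intro e he
  have hpos : 0 < (1 - q) * (e / 2) := by
    apply mul_pos <;> linarith
  obtain ⟨K, hK⟩ := (eventually_atTop.1 (hg.eventually (gt_mem_nhds hpos)))
  have hB : ∃ B : ℝ, 0 ≤ B ∧ ∀ i < m, a (K + i) - e / 2 ≤ B := by
    refine ⟨∑ i ∈ Finset.range m, a (K + i), Finset.sum_nonneg fun i _ => ha _, ?_⟩
    intro i hi
    have := Finset.single_le_sum (f := fun i => a (K + i)) (fun i _ => ha _)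
      (Finset.mem_range.2 hi)
    linarith
  obtain ⟨B, hB0, hB⟩ := hB
  have hind : ∀ j i, i < m → a (K + i + j * m) - e / 2 ≤ q ^ j * B := by
    intro j
    induction j with
    | zero => intro i hi; simpa using hB i hi
    | succ j ih =>
      intro i hi
      have h1 := hrec (K + i + j * m)
      have h2 := hK (K + i + j * m) (by rw [add_assoc]; exact Nat.le_add_right _ _)
      have h3 := mul_le_mul_of_nonneg_left (ih i hi) hq0
      have h4 : K + i + (j + 1) * m = K + i + j * m + m := by ring
      rw [h4, pow_succ]
      nlinarith
  have hlim : Tendsto (fun j : ℕ => q ^ j * B) atTop (nhds 0) := by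
    simpa using (tendsto_pow_atTop_nhds_zero_of_lt_one hq0 hq1).mul_const B
  obtain ⟨J, hJ⟩ := eventually_atTop.1 (hlim.eventually (gt_mem_nhds (half_pos he)))
  refine ⟨K + J * m, fun k hk => ?_⟩
  have hk' : k = K + (k - K) % m + ((k - K) / m) * m := by
    have := Nat.mod_add_div (k - K) m
    have h2 : K ≤ k := le_trans (Nat.le_add_right _ _) hk
    rw [mul_comm m] at this
    omega
  have hj : J ≤ (k - K) / m := by
    rw [Nat.le_div_iff_mul_le hm]; omega
  have h1 := hind ((k - K) / m) ((k - K) % m) (Nat.mod_lt _ hm)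
  rw [← hk'] at h1
  have h2 := hJ _ hj
  rw [Real.dist_eq, sub_zero, abs_of_nonneg (ha k)]
  linarith

lemma dd_seq_op {X : Type*} [NormedAddCommGroup X] [NormedSpace ℂ X] (T : X →L[ℂ] X)
    (m : ℕ) (hm : 0 < m) (hT : ‖T ^ m‖ < 1) (x F : ℕ → X)
    (hx : ∀ k, x (k + 1) = T (x k) + F k) (hF : Tendsto F atTop (nhds 0)) :
    Tendsto x atTop (nhds 0) := by
  have hG : ∀ m : ℕ, ∃ G : ℕ → X, Tendsto G atTop (nhds 0) ∧
      ∀ k, x (k + m) = (T ^ m) (x k) + G k := by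
    intro m
    induction m with
    | zero => exact ⟨fun _ => 0, tendsto_const_nhds, fun k => by simp⟩
    | succ m ih =>
      obtain ⟨G, hG, hGx⟩ := ih
      refine ⟨fun k => T (G k) + F (k + m), ?_, ?_⟩
      · have h1 : Tendsto (fun k => T (G k)) atTop (nhds 0) := by
          have := (T.continuous.tendsto 0).comp hG
          rw [map_zero] at this
          exact this
        simpa using h1.add ((tendsto_add_atTop_iff_nat m).2 hF)
      · intro k
        rw [← add_assoc, hx, hGx, map_add, pow_succ', add_assoc]
        rfl
  obtain ⟨G, hG, hGx⟩ := hG m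
  rw [tendsto_zero_iff_norm_tendsto_zero]
  refine dd_seq (fun k => ‖x k‖) (fun k => ‖G k‖) m hm ‖T ^ m‖ (norm_nonneg _) hT
    (fun k => norm_nonneg _) (tendsto_zero_iff_norm_tendsto_zero.1 hG) ?_
  intro k
  rw [hGx]
  exact (norm_add_le _ _).trans (by gcongr; exact (T ^ m).le_opNorm _)

lemma dd_scalar (l : ℂ) (τ : ℝ) (hτ : 0 < τ)
    (h : ∀ s : ℂ, 0 ≤ s.re → s ≠ l * Complex.exp (-(s * τ)))
    (w f : ℝ → ℂ) (hw : ContinuousOn w (Set.Ici (-τ)))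
    (hd : ∀ t, 0 < t → HasDerivAt w (l * w (t - τ) + f t) t)
    (hf : Tendsto f atTop (nhds 0)) : Tendsto w atTop (nhds 0) := by
  have hτC : (τ : ℂ) ≠ 0 := by exact_mod_cast hτ.ne'
  have hκ : ∀ σ : ℂ, 0 ≤ σ.re → σ ≠ (τ * l) * Complex.exp (-σ) := by
    intro σ hσ he
    apply h (σ / τ)
    · rw [Complex.div_ofReal_re]; positivity
    · have : σ / τ * τ = σ := by field_simp
      rw [this]
      nth_rewrite 1 [he]
      field_simp
  obtain ⟨m, hm, hT⟩ := ddT_pow _ hκ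
  have hcont : ∀ k : ℕ, Continuous (fun θ : Set.Icc (0:ℝ) 1 => w (((k:ℝ) - 1) * τ + θ * τ)) := by
    intro k
    refine hw.comp_continuous (by fun_prop) ?_
    intro θ
    have h1 : (0:ℝ) ≤ k := Nat.cast_nonneg k
    have h2 := θ.2.1
    simp only [Set.mem_Ici]
    nlinarith [mul_nonneg h1 hτ.le, mul_nonneg h2 hτ.le]
  let W : ℕ → C(Set.Icc (0:ℝ) 1, ℂ) := fun k => ⟨_, hcont k⟩
  have hWe : ∀ k, ∀ t ∈ Set.Icc (0:ℝ) 1, ddExt (W k) t = w (((k:ℝ) - 1) * τ + t * τ) := by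
    intro k t ht
    rw [ddExt_of_mem _ ht]; rfl
  have hW : Tendsto W atTop (nhds 0) := by
    refine dd_seq_op (ddT (τ * l)) m hm hT W (fun k => W (k + 1) - ddT (τ * l) (W k))
      (fun k => by abel) ?_
    rw [Metric.tendsto_atTop]
    intro e he
    have he2 : 0 < e / 2 / τ := by positivity
    obtain ⟨N, hN⟩ := Metric.tendsto_atTop.1 hf (e / 2 / τ) he2
    obtain ⟨K, hK⟩ := exists_nat_gt (N / τ)
    refine ⟨K + 1, fun k hk => ?_⟩
    have hkK : (K:ℝ) + 1 ≤ k := by exact_mod_cast hk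
    have hK0 : (0:ℝ) ≤ K := Nat.cast_nonneg K
    have hkτ : N < k * τ := by
      rw [div_lt_iff₀ hτ] at hK
      nlinarith
    have hkpos : 0 < k * τ := by
      apply mul_pos _ hτ; linarith
    rw [dist_zero_right]
    refine lt_of_le_of_lt ?_ (half_lt_self he)
    rw [ContinuousMap.norm_le _ (by positivity)]
    intro θ
    let D : ℝ → ℂ := fun t => w (k * τ + t * τ) - (ddExt (W k) 1 + τ * l * ddPrim (W k) t)
    have hDd : ∀ t ∈ Set.Icc (0:ℝ) 1, HasDerivAt D (τ * f (k * τ + t * τ)) t := by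
      intro t ht
      have hp : 0 < k * τ + t * τ := by nlinarith [mul_nonneg ht.1 hτ.le]
      have h1 : HasDerivAt (fun t : ℝ => k * τ + t * τ) τ t := by
        simpa using ((hasDerivAt_id t).mul_const τ).const_add (k * τ)
      have h2 := (hd _ hp).scomp t h1
      have h3 := h2.sub (((ddPrim_deriv (W k) t).const_mul (τ * l)).const_add (ddExt (W k) 1))
      refine HasDerivAt.congr_deriv (f := D) h3 ?_
      rw [hWe k t ht, Complex.real_smul]
      have : ((k:ℝ) - 1) * τ + t * τ = k * τ + t * τ - τ := by ring
      rw [this]; ring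
    have hD0 : D 0 = 0 := by
      simp only [D]
      rw [hWe k 1 (by simp), ddPrim_zero]
      have : ((k:ℝ) - 1) * τ + 1 * τ = k * τ + 0 * τ := by ring
      rw [this]; ring
    have hb := norm_image_sub_le_of_norm_deriv_le_segment' (C := e / 2)
      (fun t ht => (hDd t ht).hasDerivWithinAt) (by
        intro t ht
        have h1 := hN (k * τ + t * τ) (by nlinarith [mul_nonneg ht.1 hτ.le])
        rw [dist_zero_right] at h1
        rw [norm_mul, Complex.norm_real, Real.norm_of_nonneg hτ.le]
        rw [lt_div_iff₀ hτ] at h1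
        linarith) θ θ.2
    rw [hD0, sub_zero, sub_zero] at hb
    have hval : (W (k + 1) - ddT (τ * l) (W k)) θ = D θ := by
      have : (((k + 1 : ℕ) : ℝ) - 1) * τ + θ * τ = k * τ + θ * τ := by push_cast; ring
      change w ((((k + 1 : ℕ) : ℝ) - 1) * τ + θ * τ) - _ = _
      rw [this]; rfl
    rw [hval]
    refine hb.trans (mul_le_of_le_one_right (by positivity) θ.2.2)
  rw [Metric.tendsto_atTop]
  intro e he
  obtain ⟨K, hK⟩ := Metric.tendsto_atTop.1 hW e he
  refine ⟨K * τ, fun t ht => ?_⟩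
  have ht0 : 0 ≤ t / τ := div_nonneg (le_trans (by positivity) ht) hτ.le
  set k := ⌊t / τ⌋₊ with hk
  have h1 : (k:ℝ) ≤ t / τ := Nat.floor_le ht0
  have h2 : t / τ < k + 1 := Nat.lt_floor_add_one _
  have hkK : K ≤ k := Nat.le_floor (by rw [le_div_iff₀ hτ]; exact ht)
  have h3 := hK (k + 1) (by omega)
  rw [dist_zero_right] at h3 ⊢
  have hmem : t / τ - k ∈ Set.Icc (0:ℝ) 1 := ⟨by linarith, by linarith⟩
  have h4 : w t = W (k + 1) ⟨t / τ - k, hmem⟩ := by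
    change w t = w ((((k + 1 : ℕ) : ℝ) - 1) * τ + (t / τ - k) * τ)
    congr 1
    push_cast
    field_simp
    ring
  rw [h4]
  exact lt_of_le_of_lt ((W (k + 1)).norm_coe_le_norm _) h3

/-! ### Part II: reduction of the vector equation to scalar equations -/

lemma dd_vec {ι : Type*} [Fintype ι] [DecidableEq ι] (M : Matrix ι ι ℂ) (τ : ℝ) (hτ : 0 < τ)
    (S : Multiset ℂ) :
    (∀ l ∈ S, ∀ s : ℂ, 0 ≤ s.re → s ≠ l * Complex.exp (-(s * τ))) →
    ∀ y : ℝ → ι → ℂ, ContinuousOn y (Set.Ici (-τ)) →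
      (∀ t, 0 < t → HasDerivAt y (M *ᵥ y (t - τ)) t) →
      (∀ t, -τ ≤ t → (Polynomial.aeval M
        ((S.map fun a => Polynomial.X - Polynomial.C a).prod)) *ᵥ y t = 0) →
      Tendsto y atTop (nhds 0) := by
  induction S using Multiset.induction with
  | empty =>
    intro _ y _ _ h
    simp at h
    refine tendsto_const_nhds.congr' ?_
    filter_upwards [eventually_ge_atTop (-τ)] with t ht
    exact (h t ht).symm
  | cons a S ih =>
    intro hS y hy hd h
    have hlin : ∀ v : ι → ℂ, (Matrix.mulVecLin (M - Matrix.scalar ι a)) v = M *ᵥ v - a • v := by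
      intro v
      rw [Matrix.mulVecLin_apply, Matrix.sub_mulVec]
      simp
    let B : (ι → ℂ) →L[ℝ] (ι → ℂ) :=
      LinearMap.toContinuousLinearMap ((Matrix.mulVecLin (M - Matrix.scalar ι a)).restrictScalars ℝ)
    have hB : ∀ v, B v = M *ᵥ v - a • v := hlin
    let y1 : ℝ → ι → ℂ := fun t => B (y t)
    have hy1 : Tendsto y1 atTop (nhds 0) := by
      apply ih (fun l hl => hS l (Multiset.mem_cons_of_mem hl)) y1
      · exact B.continuous.comp_continuousOn hy
      · intro t ht
        have h1 : HasDerivAt y1 (B (M *ᵥ y (t - τ))) t := B.hasFDerivAt.comp_hasDerivAt t (hd t ht)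
        refine h1.congr_deriv ?_
        simp only [y1]
        rw [hB, hB, Matrix.mulVec_sub, Matrix.mulVec_smul]
      · intro t ht
        have h1 := h t ht
        rw [Multiset.map_cons, Multiset.prod_cons, mul_comm, map_mul, ← Matrix.mulVec_mulVec] at h1
        simp only [y1]
        rw [hB]
        have h2 : (Polynomial.aeval M) (Polynomial.X - Polynomial.C a) *ᵥ y t
            = M *ᵥ y t - a • y t := by
          rw [map_sub, Polynomial.aeval_X, Polynomial.aeval_C, Matrix.sub_mulVec,
            Algebra.algebraMap_eq_smul_one, Matrix.smul_mulVec, Matrix.one_mulVec]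
        rw [h2] at h1
        exact h1
    rw [tendsto_pi_nhds]
    intro i
    refine dd_scalar a τ hτ (hS a (Multiset.mem_cons_self _ _)) (fun t => y t i)
      (fun t => y1 (t - τ) i) ?_ ?_ ?_
    · exact (continuous_apply i).comp_continuousOn hy
    · intro t ht
      have h1 := (hasDerivAt_pi.1 (hd t ht)) i
      refine h1.congr_deriv ?_
      simp only [y1]
      rw [hB]
      simp
    · have h1 : Tendsto (fun t : ℝ => t - τ) atTop atTop := tendsto_atTop_add_const_right _ _ tendsto_id
      exact (tendsto_pi_nhds.1 (hy1.comp h1)) i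

lemma dd_sum_aeval {ι : Type*} [Fintype ι] [DecidableEq ι] (M : Matrix ι ι ℂ)
    (hM : ∀ v, ∑ i, (M *ᵥ v) i = 0) (S : Multiset ℂ) :
    ∀ v : ι → ℂ, ∑ i, v i = 0 → ∑ i, ((Polynomial.aeval M
        ((S.map fun a => Polynomial.X - Polynomial.C a).prod)) *ᵥ v) i = 0 := by
  induction S using Multiset.induction with
  | empty => intro v hv; simpa using hv
  | cons a S ih =>
    intro v hv
    rw [Multiset.map_cons, Multiset.prod_cons, map_mul, ← Matrix.mulVec_mulVec]
    set u := (Polynomial.aeval M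
        ((S.map fun a => Polynomial.X - Polynomial.C a).prod)) *ᵥ v with hu
    have h1 := ih v hv
    rw [← hu] at h1
    rw [map_sub, Polynomial.aeval_X, Polynomial.aeval_C, Matrix.sub_mulVec,
      Algebra.algebraMap_eq_smul_one, Matrix.smul_mulVec, Matrix.one_mulVec]
    simp only [Pi.sub_apply, Pi.smul_apply, Finset.sum_sub_distrib, hM u, smul_eq_mul,
      ← Finset.mul_sum, h1]
    simp

/-- Convergence to zero of the solutions with zero sum. -/
lemma dd_main {ι : Type*} [Fintype ι] [DecidableEq ι] (M : Matrix ι ι ℂ) (τ : ℝ) (hτ : 0 < τ)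
    (hM : ∀ v, ∑ i, (M *ᵥ v) i = 0)
    (hker : ∀ v, M *ᵥ v = 0 → ∑ i, v i = 0 → v = 0)
    (hst : ∀ l, M.charpoly.IsRoot l → l ≠ 0 →
      ∀ s : ℂ, 0 ≤ s.re → s ≠ l * Complex.exp (-(s * τ)))
    (y : ℝ → ι → ℂ) (hy : ContinuousOn y (Set.Ici (-τ)))
    (hd : ∀ t, 0 < t → HasDerivAt y (M *ᵥ y (t - τ)) t)
    (hsum : ∀ t, -τ ≤ t → ∑ i, y t i = 0) : Tendsto y atTop (nhds 0) := by
  have hpow : ∀ (m : ℕ) (v : ι → ℂ), M ^ m *ᵥ v = 0 → ∑ i, v i = 0 → v = 0 := by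
    intro m
    induction m with
    | zero => intro v h _; simpa using h
    | succ m ih =>
      intro v h hv
      rw [pow_succ, ← Matrix.mulVec_mulVec] at h
      exact hker v (ih _ h (hM v)) hv
  have hfac := (IsAlgClosed.splits M.charpoly).eq_prod_roots_of_monic M.charpoly_monic
  refine dd_vec M τ hτ (M.charpoly.roots.filter (fun a => a ≠ 0)) ?_ y hy hd ?_
  · intro l hl
    rw [Multiset.mem_filter] at hl
    exact hst l (Polynomial.isRoot_of_mem_roots hl.1) hl.2
  · intro t ht
    refine hpow (M.charpoly.roots.count 0) _ ?_ (dd_sum_aeval M hM _ _ (hsum t ht))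
    rw [Matrix.mulVec_mulVec]
    have h0 := Matrix.aeval_self_charpoly M
    rw [hfac, ← Multiset.filter_add_not (fun a => a = 0) M.charpoly.roots, Multiset.map_add,
      Multiset.prod_add, map_mul, Multiset.filter_eq', Multiset.map_replicate,
      Multiset.prod_replicate] at h0
    simp only [map_zero, sub_zero, map_pow, Polynomial.aeval_X] at h0
    rw [h0, Matrix.zero_mulVec]

/-! ### Part III: graph Laplacians -/

lemma adjM_nonneg (n : ℕ) (E : Fin n → Fin n → Prop) [DecidableRel E] (i j : Fin n) :
    0 ≤ adjM n E i j := by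
  unfold adjM; split_ifs <;> norm_num

lemma adjM_pos (n : ℕ) (E : Fin n → Fin n → Prop) [DecidableRel E] {i j : Fin n} (h : E i j) :
    0 < adjM n E i j := by
  unfold adjM; simp [h]

lemma sc_propagate {n : ℕ} {E : Fin n → Fin n → Prop} (hsc : StronglyConnected n E)
    (P : Fin n → Prop) (hP : ∀ i j, E i j → P i → P j) (i₀ : Fin n) (h0 : P i₀) (j : Fin n) :
    P j := by
  by_cases hij : i₀ = j
  · exact hij ▸ h0
  · have h1 := hsc i₀ j hij
    induction h1 with
    | single h => exact hP _ _ h h0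
    | tail _ h ih =>
      rename_i b c _
      by_cases hb : i₀ = b
      · exact hP _ _ h (hb ▸ h0)
      · exact hP _ _ h (ih hb)

lemma sc_swap {n : ℕ} {E : Fin n → Fin n → Prop} (hsc : StronglyConnected n E) :
    StronglyConnected n (fun i j => E j i) := by
  intro i j hij
  exact Relation.transGen_swap.2 (hsc j i (Ne.symm hij))

lemma max_principle {n : ℕ} {E : Fin n → Fin n → Prop} (hsc : StronglyConnected n E)
    (b : Fin n → Fin n → ℝ) (hb0 : ∀ i j, 0 ≤ b i j) (hb : ∀ i j, E i j → 0 < b i j)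
    (u : Fin n → ℝ) (hu : ∀ i, ∑ j, b i j * (u i - u j) = 0) : ∃ c, ∀ i, u i = c := by
  rcases isEmpty_or_nonempty (Fin n) with h | h
  · exact ⟨0, fun i => h.elim i⟩
  obtain ⟨i₀, hi₀⟩ := Finite.exists_max u
  refine ⟨u i₀, sc_propagate hsc (fun i => u i = u i₀) ?_ i₀ rfl⟩
  intro i j hij hi
  have h1 := (Finset.sum_eq_zero_iff_of_nonneg (fun j _ => mul_nonneg (hb0 i j)
    (by rw [hi]; linarith [hi₀ j]))).1 (hu i) j (Finset.mem_univ j)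
  rcases mul_eq_zero.1 h1 with h2 | h2
  · exact absurd h2 (hb i j hij).ne'
  · linarith

lemma max_principleC {n : ℕ} {E : Fin n → Fin n → Prop} (hsc : StronglyConnected n E)
    (b : Fin n → Fin n → ℝ) (hb0 : ∀ i j, 0 ≤ b i j) (hb : ∀ i j, E i j → 0 < b i j)
    (u : Fin n → ℂ) (hu : ∀ i, ∑ j, (b i j : ℂ) * (u i - u j) = 0) : ∃ c, ∀ i, u i = c := by
  obtain ⟨c1, h1⟩ := max_principle hsc b hb0 hb (fun i => (u i).re) (fun i => by
    have := congrArg Complex.re (hu i)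
    simpa using this)
  obtain ⟨c2, h2⟩ := max_principle hsc b hb0 hb (fun i => (u i).im) (fun i => by
    have := congrArg Complex.im (hu i)
    simpa using this)
  exact ⟨⟨c1, c2⟩, fun i => Complex.ext (h1 i) (h2 i)⟩

/-- Positive left null vector of the in-Laplacian. -/
lemma perron {n : ℕ} (hn : 0 < n) (E : Fin n → Fin n → Prop) [DecidableRel E]
    (hsc : StronglyConnected n E) :
    ∃ w : Fin n → ℝ, (∀ i, 0 < w i) ∧ ∀ j, ∑ i, w i * adjM n E i j = w j * degIn n E j := by
  have hdet : (Lin n E).det = 0 := by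
    rw [← Matrix.exists_mulVec_eq_zero_iff]
    refine ⟨fun _ => 1, ?_, ?_⟩
    · intro h
      have := congrFun h ⟨0, hn⟩
      simp at this
    · funext i
      simp [Lin, Matrix.sub_mulVec, Matrix.mulVec_diagonal]
      simp [Matrix.mulVec, dotProduct, degIn]
  obtain ⟨w, hw0, hw⟩ := Matrix.exists_vecMul_eq_zero_iff.2 hdet
  have hw1 : ∀ j, ∑ i, w i * adjM n E i j = w j * degIn n E j := by
    intro j
    have := congrFun hw j
    simp [Lin, Matrix.vecMul_sub, Matrix.vecMul_diagonal] at this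
    simp only [Matrix.vecMul, dotProduct] at this
    linarith
  have hdeg : ∀ j, 0 ≤ degIn n E j := fun j => Finset.sum_nonneg fun i _ => adjM_nonneg n E j i
  have hle : ∀ j, |w j| * degIn n E j ≤ ∑ i, |w i| * adjM n E i j := by
    intro j
    calc |w j| * degIn n E j = |w j * degIn n E j| := by rw [abs_mul, abs_of_nonneg (hdeg j)]
      _ = |∑ i, w i * adjM n E i j| := by rw [hw1]
      _ ≤ ∑ i, |w i * adjM n E i j| := Finset.abs_sum_le_sum_abs _ _
      _ = _ := by
        refine Finset.sum_congr rfl fun i _ => ?_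
        rw [abs_mul, abs_of_nonneg (adjM_nonneg n E i j)]
  have hsum : ∑ j, |w j| * degIn n E j = ∑ j, ∑ i, |w i| * adjM n E i j := by
    rw [Finset.sum_comm]
    refine Finset.sum_congr rfl fun i _ => ?_
    rw [← Finset.mul_sum]; rfl
  have heq : ∀ j, |w j| * degIn n E j = ∑ i, |w i| * adjM n E i j := fun j =>
    (Finset.sum_eq_sum_iff_of_le (fun j _ => hle j)).1 hsum j (Finset.mem_univ j)
  refine ⟨fun i => |w i|, ?_, fun j => (heq j).symm⟩
  intro i
  by_contra hcon
  have hi : |w i| = 0 := le_antisymm (not_lt.1 hcon) (abs_nonneg _)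
  apply hw0
  funext k
  have := sc_propagate (sc_swap hsc) (fun i => |w i| = 0) (by
    intro a b hab ha
    have h1 := heq a
    rw [ha, zero_mul] at h1
    have h2 := (Finset.sum_eq_zero_iff_of_nonneg (fun j _ => mul_nonneg (abs_nonneg (w j))
      (adjM_nonneg n E j a))).1 h1.symm b (Finset.mem_univ b)
    rcases mul_eq_zero.1 h2 with h3 | h3
    · exact h3
    · exact absurd h3 (adjM_pos n E hab).ne') i hi k
  simpa using this

lemma sum_diag_C {n : ℕ} (d : Fin n → ℝ) (i : Fin n) (f : Fin n → ℂ) :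
    ∑ j, ((if i = j then d i else 0 : ℝ) : ℂ) * f j = d i * f i := by
  rw [Finset.sum_eq_single i]
  · simp
  · intro j _ hj
    simp [Ne.symm hj]
  · simp

lemma degIn_sum_C (n : ℕ) (E : Fin n → Fin n → Prop) [DecidableRel E] (i : Fin n) (x : Fin n → ℂ) :
    ∑ j, (adjM n E i j : ℂ) * (x i - x j)
      = (degIn n E i : ℂ) * x i - ∑ j, (adjM n E i j : ℂ) * x j := by
  have h : (degIn n E i : ℂ) = ∑ j, (adjM n E i j : ℂ) := by
    rw [degIn]; push_cast; rfl
  rw [h, Finset.sum_mul, ← Finset.sum_sub_distrib]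
  exact Finset.sum_congr rfl fun j _ => by ring

lemma MmatC_inl (n : ℕ) (E : Fin n → Fin n → Prop) [DecidableRel E] (ε : ℝ)
    (v : Fin n ⊕ Fin n → ℂ) (i : Fin n) :
    (MmatC n E ε *ᵥ v) (Sum.inl i) =
      - ∑ j, (adjM n E i j : ℂ) * (v (Sum.inl i) - v (Sum.inl j)) + ε * v (Sum.inr i) := by
  have e1 : ∀ j, MmatC n E ε (Sum.inl i) (Sum.inl j)
      = (adjM n E i j : ℂ) - ((if i = j then degIn n E i else 0 : ℝ) : ℂ) := by
    intro j
    simp only [MmatC, Mmat, Matrix.map_apply, Matrix.fromBlocks_apply₁₁, Lin, Matrix.neg_apply,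
      Matrix.sub_apply, Matrix.diagonal_apply]
    rw [← Complex.ofReal_sub]
    congr 1; ring
  have e2 : ∀ j, MmatC n E ε (Sum.inl i) (Sum.inr j)
      = ((if i = j then (fun _ => ε) i else 0 : ℝ) : ℂ) := by
    intro j
    simp only [MmatC, Mmat, Matrix.map_apply, Matrix.fromBlocks_apply₁₂, Matrix.smul_apply,
      Matrix.one_apply, smul_eq_mul]
    congr 1
    split_ifs <;> simp
  rw [degIn_sum_C n E i (fun j => v (Sum.inl j))]
  simp only [Matrix.mulVec, dotProduct, Fintype.sum_sum_type, e1, e2, sub_mul,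
    Finset.sum_sub_distrib]
  rw [sum_diag_C (degIn n E), sum_diag_C (fun _ => ε)]
  ring

lemma MmatC_inr (n : ℕ) (E : Fin n → Fin n → Prop) [DecidableRel E] (ε : ℝ)
    (v : Fin n ⊕ Fin n → ℂ) (i : Fin n) :
    (MmatC n E ε *ᵥ v) (Sum.inr i) =
      ∑ j, (adjM n E i j : ℂ) * (v (Sum.inl i) - v (Sum.inl j))
      - ((degOut n E i : ℂ) * v (Sum.inr i) - ∑ j, (adjM n E i j : ℂ) * v (Sum.inr j))
      - ε * v (Sum.inr i) := by
  have e1 : ∀ j, MmatC n E ε (Sum.inr i) (Sum.inl j)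
      = ((if i = j then degIn n E i else 0 : ℝ) : ℂ) - (adjM n E i j : ℂ) := by
    intro j
    simp only [MmatC, Mmat, Matrix.map_apply, Matrix.fromBlocks_apply₂₁, Lin,
      Matrix.sub_apply, Matrix.diagonal_apply]
    rw [← Complex.ofReal_sub]
  have e2 : ∀ j, MmatC n E ε (Sum.inr i) (Sum.inr j)
      = (adjM n E i j : ℂ) - ((if i = j then degOut n E i else 0 : ℝ) : ℂ)
        - ((if i = j then (fun _ => ε) i else 0 : ℝ) : ℂ) := by
    intro j
    simp only [MmatC, Mmat, Matrix.map_apply, Matrix.fromBlocks_apply₂₂, Matrix.smul_apply,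
      Matrix.one_apply, smul_eq_mul, Lout, Matrix.neg_apply,
      Matrix.sub_apply, Matrix.diagonal_apply]
    rw [← Complex.ofReal_sub, ← Complex.ofReal_sub]
    congr 1
    split_ifs <;> ring
  rw [degIn_sum_C n E i (fun j => v (Sum.inl j))]
  simp only [Matrix.mulVec, dotProduct, Fintype.sum_sum_type, e1, e2, sub_mul,
    Finset.sum_sub_distrib]
  rw [sum_diag_C (degIn n E), sum_diag_C (degOut n E), sum_diag_C (fun _ => ε)]
  ring

lemma MmatC_sum (n : ℕ) (E : Fin n → Fin n → Prop) [DecidableRel E] (ε : ℝ)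
    (v : Fin n ⊕ Fin n → ℂ) : ∑ k, (MmatC n E ε *ᵥ v) k = 0 := by
  rw [Fintype.sum_sum_type]
  simp only [MmatC_inl, MmatC_inr, Finset.sum_add_distrib, Finset.sum_sub_distrib,
    Finset.sum_neg_distrib]
  have : ∑ i, ∑ j, (adjM n E i j : ℂ) * v (Sum.inr j)
      = ∑ i, (degOut n E i : ℂ) * v (Sum.inr i) := by
    rw [Finset.sum_comm]
    refine Finset.sum_congr rfl fun j _ => ?_
    rw [← Finset.sum_mul, degOut]
    push_cast; rfl
  rw [this]; ring

lemma MmatC_cont (n : ℕ) (E : Fin n → Fin n → Prop) [DecidableRel E] :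
    Continuous (fun p : ℝ × (Fin n ⊕ Fin n → ℂ) => MmatC n E p.1 *ᵥ p.2) := by
  rw [continuous_pi_iff]
  rintro (i | i)
  · simp only [MmatC_inl]
    fun_prop
  · simp only [MmatC_inr]
    fun_prop

/-- Weighted sum annihilating the in-Laplacian. -/
lemma perron_sum {n : ℕ} (E : Fin n → Fin n → Prop) [DecidableRel E] (w : Fin n → ℝ)
    (hw : ∀ j, ∑ i, w i * adjM n E i j = w j * degIn n E j) (x : Fin n → ℂ) :
    ∑ i, (w i : ℂ) * ∑ j, (adjM n E i j : ℂ) * (x i - x j) = 0 := by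
  have h1 : ∀ i, (w i : ℂ) * ∑ j, (adjM n E i j : ℂ) * (x i - x j)
      = (w i : ℂ) * (degIn n E i : ℂ) * x i - ∑ j, (w i : ℂ) * (adjM n E i j : ℂ) * x j := by
    intro i
    rw [degIn_sum_C, mul_sub, Finset.mul_sum]
    simp only [mul_assoc]
  simp only [h1, Finset.sum_sub_distrib]
  rw [Finset.sum_comm (f := fun i j => (w i : ℂ) * (adjM n E i j : ℂ) * x j), sub_eq_zero]
  refine Finset.sum_congr rfl fun j _ => ?_
  rw [← Finset.sum_mul]
  congr 1
  exact_mod_cast (hw j).symm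

/-- Kernel of the out-Laplacian. -/
lemma out_ker {n : ℕ} (E : Fin n → Fin n → Prop) [DecidableRel E]
    (hsc : StronglyConnected n E) (p : Fin n → ℝ) (hp : ∀ i, 0 < p i)
    (hpe : ∀ i, ∑ j, adjM n E i j * p j = degOut n E i * p i) (z : Fin n → ℂ)
    (hz : ∀ i, (degOut n E i : ℂ) * z i - ∑ j, (adjM n E i j : ℂ) * z j = 0) :
    ∃ d : ℂ, ∀ i, z i = d * p i := by
  have hpC : ∀ i, (p i : ℂ) ≠ 0 := fun i => by exact_mod_cast (hp i).ne'
  obtain ⟨d, hd⟩ := max_principleC hsc (fun i j => adjM n E i j * p j)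
    (fun i j => mul_nonneg (adjM_nonneg n E i j) (hp j).le)
    (fun i j h => mul_pos (adjM_pos n E h) (hp j)) (fun i => z i / p i) (by
      intro i
      simp only [mul_sub, Finset.sum_sub_distrib, ← Finset.sum_mul]
      have h1 : ∑ j, ((adjM n E i j * p j : ℝ) : ℂ) = ((degOut n E i * p i : ℝ) : ℂ) := by
        exact_mod_cast hpe i
      rw [h1, ← hz i]
      congr 1
      · push_cast
        have := hpC i
        field_simp
      · refine Finset.sum_congr rfl fun j _ => ?_
        push_cast
        have := hpC j
        field_simp)
  refine ⟨d, fun i => ?_⟩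
  have := hd i
  have h2 := hpC i
  field_simp at this
  rw [this]; ring

/-- Positive null vector of the out-Laplacian. -/
lemma perron_out {n : ℕ} (hn : 0 < n) (E : Fin n → Fin n → Prop) [DecidableRel E]
    (hsc : StronglyConnected n E) :
    ∃ p : Fin n → ℝ, (∀ i, 0 < p i) ∧ ∀ i, ∑ j, adjM n E i j * p j = degOut n E i * p i := by
  obtain ⟨p, hp, hpe⟩ := perron hn (fun i j => E j i) (sc_swap hsc)
  refine ⟨p, hp, fun i => ?_⟩
  have h1 := hpe i
  have h2 : degIn n (fun i j => E j i) i = degOut n E i := rfl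
  rw [h2] at h1
  rw [mul_comm, ← h1]
  refine Finset.sum_congr rfl fun j _ => ?_
  rw [mul_comm]; rfl

lemma MmatC_ker {n : ℕ} (hn : 0 < n) (E : Fin n → Fin n → Prop) [DecidableRel E]
    (hsc : StronglyConnected n E) (ε : ℝ) (hε : 0 < ε) (v : Fin n ⊕ Fin n → ℂ)
    (hv : MmatC n E ε *ᵥ v = 0) (hs : ∑ k, v k = 0) : v = 0 := by
  obtain ⟨w, hw, hwe⟩ := perron hn E hsc
  obtain ⟨p, hp, hpe⟩ := perron_out hn E hsc
  have : Nonempty (Fin n) := ⟨⟨0, hn⟩⟩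
  have h1 : ∀ i, - ∑ j, (adjM n E i j : ℂ) * (v (Sum.inl i) - v (Sum.inl j))
      + ε * v (Sum.inr i) = 0 := fun i => by rw [← MmatC_inl, hv]; rfl
  have h2 : ∀ i, ∑ j, (adjM n E i j : ℂ) * (v (Sum.inl i) - v (Sum.inl j))
      - ((degOut n E i : ℂ) * v (Sum.inr i) - ∑ j, (adjM n E i j : ℂ) * v (Sum.inr j))
      - ε * v (Sum.inr i) = 0 := fun i => by rw [← MmatC_inr, hv]; rfl
  obtain ⟨d, hd⟩ := out_ker E hsc p hp hpe (fun i => v (Sum.inr i)) (fun i => by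
    linear_combination -(h1 i) - h2 i)
  have hd0 : d = 0 := by
    have h3 := perron_sum E w hwe (fun i => v (Sum.inl i))
    have h4 : ∀ i, ∑ j, (adjM n E i j : ℂ) * (v (Sum.inl i) - v (Sum.inl j))
        = ε * (d * p i) := fun i => by
      rw [← hd i]; linear_combination -(h1 i)
    simp only [h4] at h3
    have h5 : (ε : ℂ) * d * ((∑ i, w i * p i : ℝ) : ℂ) = 0 := by
      rw [← h3]
      push_cast
      rw [Finset.mul_sum]
      refine Finset.sum_congr rfl fun i _ => by ring
    have h6 : (0:ℝ) < ∑ i, w i * p i :=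
      Finset.sum_pos (fun i _ => mul_pos (hw i) (hp i)) Finset.univ_nonempty
    have h7 : ((∑ i, w i * p i : ℝ) : ℂ) ≠ 0 := by exact_mod_cast h6.ne'
    have h8 : (ε : ℂ) ≠ 0 := by exact_mod_cast hε.ne'
    rcases mul_eq_zero.1 h5 with h9 | h9
    · exact (mul_eq_zero.1 h9).resolve_left h8
    · exact absurd h9 h7
  have hz : ∀ i, v (Sum.inr i) = 0 := fun i => by
    have := hd i
    simpa [hd0] using this
  obtain ⟨c, hc⟩ := max_principleC hsc (adjM n E) (adjM_nonneg n E) (fun i j h => adjM_pos n E h)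
    (fun i => v (Sum.inl i)) (fun i => by
      have := h1 i
      rw [hz i] at this
      simpa using this)
  have hc0 : c = 0 := by
    rw [Fintype.sum_sum_type] at hs
    simp only [hz, hc] at hs
    simpa [hn.ne'] using hs
  funext k
  rcases k with i | i
  · rw [hc i, hc0]; rfl
  · exact hz i

/-- A Gershgorin bound for the nonzero eigenvalues of `M(0)`. -/
lemma gersh {n : ℕ} (E : Fin n → Fin n → Prop) [DecidableRel E] (δ : ℝ)
    (hδ : ∀ i, degIn n E i ≤ δ ∧ degOut n E i ≤ δ) (l : ℂ) (v : Fin n ⊕ Fin n → ℂ) (hv0 : v ≠ 0)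
    (hv : MmatC n E 0 *ᵥ v = l • v) : ∃ d : ℝ, d ≤ δ ∧ ‖l + d‖ ≤ d := by
  have h1 : ∀ i, - ∑ j, (adjM n E i j : ℂ) * (v (Sum.inl i) - v (Sum.inl j))
      = l * v (Sum.inl i) := fun i => by
    have := congrFun hv (Sum.inl i)
    rw [MmatC_inl] at this
    simpa using this
  have h2 : ∀ i, ∑ j, (adjM n E i j : ℂ) * (v (Sum.inl i) - v (Sum.inl j))
      - ((degOut n E i : ℂ) * v (Sum.inr i) - ∑ j, (adjM n E i j : ℂ) * v (Sum.inr j))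
      = l * v (Sum.inr i) := fun i => by
    have := congrFun hv (Sum.inr i)
    rw [MmatC_inr] at this
    simpa using this
  by_cases hx : ∀ i, v (Sum.inl i) = 0
  · have h3 : ∀ i, (l + degOut n E i) * v (Sum.inr i) = ∑ j, (adjM n E i j : ℂ) * v (Sum.inr j) := by
      intro i
      have := h2 i
      simp only [hx, sub_self, mul_zero, Finset.sum_const_zero] at this
      linear_combination -this
    have h4 : ∑ i, ‖l + degOut n E i‖ * ‖v (Sum.inr i)‖ ≤ ∑ i, degOut n E i * ‖v (Sum.inr i)‖ := by
      calc ∑ i, ‖l + degOut n E i‖ * ‖v (Sum.inr i)‖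
          ≤ ∑ i, ∑ j, adjM n E i j * ‖v (Sum.inr j)‖ := by
            refine Finset.sum_le_sum fun i _ => ?_
            rw [← norm_mul, h3]
            refine (norm_sum_le _ _).trans (le_of_eq ?_)
            refine Finset.sum_congr rfl fun j _ => ?_
            rw [norm_mul, Complex.norm_real, Real.norm_of_nonneg (adjM_nonneg n E i j)]
        _ = _ := by
            rw [Finset.sum_comm]
            refine Finset.sum_congr rfl fun j _ => ?_
            rw [← Finset.sum_mul]; rfl
    by_contra hcon
    push Not at hcon
    obtain ⟨i₀, hi₀⟩ : ∃ i, v (Sum.inr i) ≠ 0 := by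
      by_contra hall
      push Not at hall
      apply hv0
      funext k
      rcases k with i | i
      · exact hx i
      · exact hall i
    refine absurd h4 (not_le.2 (Finset.sum_lt_sum (fun i _ => ?_) ⟨i₀, Finset.mem_univ _, ?_⟩))
    · exact mul_le_mul_of_nonneg_right (hcon _ (hδ i).2).le (norm_nonneg _)
    · exact mul_lt_mul_of_pos_right (hcon _ (hδ i₀).2) (norm_pos_iff.2 hi₀)
  · push Not at hx
    obtain ⟨i₁, hi₁⟩ := hx
    have : Nonempty (Fin n) := ⟨i₁⟩
    obtain ⟨i, hi⟩ := Finite.exists_max (fun i => ‖v (Sum.inl i)‖)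
    have hpos : 0 < ‖v (Sum.inl i)‖ := lt_of_lt_of_le (norm_pos_iff.2 hi₁) (hi i₁)
    refine ⟨degIn n E i, (hδ i).1, ?_⟩
    have h3 : (l + degIn n E i) * v (Sum.inl i) = ∑ j, (adjM n E i j : ℂ) * v (Sum.inl j) := by
      have := h1 i
      simp only [mul_sub, Finset.sum_sub_distrib, ← Finset.sum_mul] at this
      rw [degIn]; push_cast
      linear_combination -this
    have h4 : ‖l + degIn n E i‖ * ‖v (Sum.inl i)‖ ≤ degIn n E i * ‖v (Sum.inl i)‖ := by
      rw [← norm_mul, h3]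
      refine (norm_sum_le _ _).trans ?_
      rw [degIn, Finset.sum_mul]
      refine Finset.sum_le_sum fun j _ => ?_
      rw [norm_mul, Complex.norm_real, Real.norm_of_nonneg (adjM_nonneg n E i j)]
      exact mul_le_mul_of_nonneg_left (hi j) (adjM_nonneg n E i j)
    exact le_of_mul_le_mul_right h4 hpos

lemma gersh_bounds (l : ℂ) (hl : l ≠ 0) (d δ : ℝ) (hd : d ≤ δ) (h : ‖l + d‖ ≤ d) :
    0 < δ ∧ l.re < 0 ∧ ‖l‖ ≤ 2 * δ ∧ |l.im| ≤ δ := by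
  have hd0 : 0 ≤ d := (norm_nonneg _).trans h
  have h1 : ‖l + d‖ ^ 2 ≤ d ^ 2 := by gcongr
  rw [← Complex.normSq_eq_norm_sq, Complex.normSq_apply] at h1
  simp at h1
  have h2 : 0 < l.re * l.re + l.im * l.im := by
    rw [← Complex.normSq_apply]; exact Complex.normSq_pos.2 hl
  have hdpos : 0 < d := by
    rcases hd0.lt_or_eq with h | h
    · exact h
    · subst h; nlinarith
  have hre : l.re < 0 := by nlinarith
  have hδ : 0 < δ := by linarith
  have h3 : l.re * l.re + l.im * l.im ≤ -2 * δ * l.re := by nlinarith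
  refine ⟨hδ, hre, ?_, ?_⟩
  · have hre2 : -l.re ≤ 2 * δ := by nlinarith [mul_self_nonneg l.im]
    apply le_of_sq_le_sq _ (by linarith)
    rw [← Complex.normSq_eq_norm_sq, Complex.normSq_apply]
    nlinarith
  · apply abs_le_of_sq_le_sq _ hδ.le
    nlinarith [sq_nonneg (l.re + δ)]

lemma stable_zero (l : ℂ) (δ r τ : ℝ) (hτ : 0 < τ) (hδ : 0 < δ) (hr : r < 0) (hlr : l.re ≤ r)
    (hln : ‖l‖ ≤ 2 * δ) (hli : |l.im| ≤ δ)
    (hτ2 : τ < (1 / (2 * δ)) * Real.arctan ((-r) / δ)) (s : ℂ) (hs : 0 ≤ s.re)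
    (hsl : l = s * Complex.exp (s * τ)) : False := by
  set β := Real.arctan ((-r) / δ) with hβ
  have hβ2 : β < Real.pi / 2 := Real.arctan_lt_pi_div_two _
  have htan : Real.tan β = (-r) / δ := Real.tan_arctan _
  have hτβ : 2 * δ * τ < β := by
    have := mul_lt_mul_of_pos_left hτ2 (show 0 < 2 * δ by positivity)
    have h2 : 2 * δ * (1 / (2 * δ) * β) = β := by field_simp
    linarith
  have hsn : ‖s‖ ≤ 2 * δ := by
    refine le_trans ?_ hln
    rw [hsl, norm_mul, Complex.norm_exp]
    apply le_mul_of_one_le_right (norm_nonneg _)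
    apply Real.one_le_exp
    simp; positivity
  -- real and imaginary parts
  set x := s.re with hx
  set q := |s.im| with hq
  have hq0 : 0 ≤ q := abs_nonneg _
  have hqn : q ≤ 2 * δ := (Complex.abs_im_le_norm s).trans hsn
  have hqβ : q * τ < β := lt_of_le_of_lt (mul_le_mul_of_nonneg_right hqn hτ.le) hτβ
  have hqτ0 : 0 ≤ q * τ := by positivity
  set e := Real.exp (x * τ) with he
  have he0 : 0 < e := Real.exp_pos _
  have hsin : 0 ≤ Real.sin (q * τ) := Real.sin_nonneg_of_nonneg_of_le_pi hqτ0 (by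
    linarith [Real.pi_pos])
  have hcos : 0 < Real.cos (q * τ) := Real.cos_pos_of_mem_Ioo ⟨by linarith [Real.pi_pos], by linarith⟩
  have hre : l.re = e * (x * Real.cos (q * τ) - q * Real.sin (q * τ)) := by
    have h1 : l.re = e * (x * Real.cos (s.im * τ) - s.im * Real.sin (s.im * τ)) := by
      rw [hsl, Complex.mul_re, Complex.exp_re, Complex.exp_im]
      simp
      ring
    rw [h1]
    rcases abs_cases s.im with ⟨h, _⟩ | ⟨h, _⟩ <;> rw [hq, h]
    rw [neg_mul, Real.cos_neg, Real.sin_neg]; ring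
  have him : |l.im| = e * (x * Real.sin (q * τ) + q * Real.cos (q * τ)) := by
    have h1 : l.im = e * (x * Real.sin (s.im * τ) + s.im * Real.cos (s.im * τ)) := by
      rw [hsl, Complex.mul_im, Complex.exp_re, Complex.exp_im]
      simp
      ring
    have hnn : 0 ≤ e * (x * Real.sin (q * τ) + q * Real.cos (q * τ)) := by positivity
    rcases abs_cases s.im with ⟨h, _⟩ | ⟨h, _⟩
    · rw [hq, h] at hnn ⊢
      rw [h1, abs_of_nonneg hnn]
    · have : s.im = -q := by rw [hq, h]; ring
      rw [h1, this, neg_mul, Real.cos_neg, Real.sin_neg, ← abs_of_nonneg hnn, ← abs_neg]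
      congr 1; ring
  have htl : Real.tan (q * τ) < (-r) / δ := by
    rw [← htan]
    exact Real.tan_lt_tan_of_lt_of_lt_pi_div_two (by linarith [Real.pi_pos]) hβ2 hqβ
  rw [Real.tan_eq_sin_div_cos, div_lt_div_iff₀ hcos hδ] at htl
  -- sin * δ < -r * cos
  set S := Real.sin (q * τ)
  set C := Real.cos (q * τ)
  have hqpos : 0 < q := by
    rcases hq0.lt_or_eq with h | h
    · exact h
    · rw [← h] at hre
      have : 0 ≤ e * (x * C - 0 * S) := by
        have : 0 ≤ e * (x * C) := by positivity
        linarith [this, (by ring : e * (x * C - 0 * S) = e * (x * C))]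
      linarith
  have h1 : -r ≤ e * (q * S) := by
    have : 0 ≤ e * (x * C) := by positivity
    nlinarith
  have h2 : e * (q * C) ≤ δ := by
    have : 0 ≤ e * (x * S) := by positivity
    nlinarith
  have h3 : e * q * (S * δ) < e * q * (-r * C) := mul_lt_mul_of_pos_left htl (by positivity)
  have h4 : -r * (e * (q * C)) ≤ -r * δ := mul_le_mul_of_nonneg_left h2 (by linarith)
  have h5 : -r * δ ≤ e * (q * S) * δ := mul_le_mul_of_nonneg_right h1 hδ.le
  nlinarith

/-! ### Part IV: spectral perturbation -/

lemma root_iff_eig {ι : Type*} [Fintype ι] [DecidableEq ι] (M : Matrix ι ι ℂ) (l : ℂ) :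
    M.charpoly.IsRoot l ↔ ∃ v, v ≠ 0 ∧ M *ᵥ v = l • v := by
  rw [Polynomial.IsRoot, Matrix.eval_charpoly, ← Matrix.exists_mulVec_eq_zero_iff]
  have h : ∀ v, (Matrix.scalar ι l - M) *ᵥ v = l • v - M *ᵥ v := by
    intro v
    rw [Matrix.sub_mulVec]
    congr 1
    ext i
    simp
  simp only [h, sub_eq_zero]
  exact ⟨fun ⟨v, h0, h1⟩ => ⟨v, h0, h1.symm⟩, fun ⟨v, h0, h1⟩ => ⟨v, h0, h1.symm⟩⟩

lemma eig_normalized {ι : Type*} [Fintype ι] [DecidableEq ι] (M : Matrix ι ι ℂ) (l : ℂ)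
    (h : M.charpoly.IsRoot l) : ∃ v, ‖v‖ = 1 ∧ M *ᵥ v = l • v := by
  obtain ⟨v, hv0, hv⟩ := (root_iff_eig M l).1 h
  refine ⟨((‖v‖ : ℂ)⁻¹) • v, ?_, ?_⟩
  · rw [norm_smul, norm_inv, Complex.norm_real, norm_norm]
    exact inv_mul_cancel₀ (norm_ne_zero_iff.2 hv0)
  · rw [Matrix.mulVec_smul, hv, smul_comm]

lemma spectral_perturb {n : ℕ} (hn : 0 < n) (E : Fin n → Fin n → Prop) [DecidableRel E]
    (hsc : StronglyConnected n E) (τ : ℝ) (hτ : 0 < τ)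
    (h0 : ∀ l : ℂ, (MmatC n E 0).charpoly.IsRoot l → l ≠ 0 →
      ∀ s : ℂ, 0 ≤ s.re → l ≠ s * Complex.exp (s * τ)) :
    ∃ e : ℝ, 0 < e ∧ ∀ ε : ℝ, 0 < ε → ε ≤ e → ∀ l : ℂ, (MmatC n E ε).charpoly.IsRoot l → l ≠ 0 →
      ∀ s : ℂ, 0 ≤ s.re → l ≠ s * Complex.exp (s * τ) := by
  by_contra hcon
  push Not at hcon
  have hseq : ∀ k : ℕ, ∃ (ε : ℝ) (v : Fin n ⊕ Fin n → ℂ) (s : ℂ), 0 < ε ∧ ε ≤ 1 / ((k:ℝ) + 1) ∧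
      ‖v‖ = 1 ∧ MmatC n E ε *ᵥ v = (s * Complex.exp (s * τ)) • v ∧
      s * Complex.exp (s * τ) ≠ 0 ∧ 0 ≤ s.re := by
    intro k
    obtain ⟨ε, hε, hεk, l, hl, hl0, s, hs, hls⟩ := hcon (1 / ((k:ℝ) + 1)) (by positivity)
    obtain ⟨v, hv1, hv⟩ := eig_normalized _ _ hl
    exact ⟨ε, v, s, hε, hεk, hv1, hls ▸ hv, hls ▸ hl0, hs⟩
  choose ε v s hε hεk hv1 hv hl0 hs using hseq
  -- boundedness
  have hcomp : IsCompact (Set.Icc (0:ℝ) 1 ×ˢ Metric.closedBall (0 : Fin n ⊕ Fin n → ℂ) 1) :=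
    isCompact_Icc.prod (isCompact_closedBall _ _)
  obtain ⟨B, hB⟩ := hcomp.exists_bound_of_continuousOn (MmatC_cont n E).continuousOn
  have hsB : ∀ k, ‖s k‖ ≤ B := by
    intro k
    have hk1 : ε k ≤ 1 := (hεk k).trans (by
      rw [div_le_one (by positivity)]
      have : (0:ℝ) ≤ k := Nat.cast_nonneg k
      linarith)
    have h1 := hB (ε k, v k) ⟨⟨(hε k).le, hk1⟩, by simp [hv1 k]⟩
    simp only at h1
    rw [hv k, norm_smul, hv1 k, mul_one] at h1
    refine le_trans ?_ h1
    rw [norm_mul, Complex.norm_exp]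
    apply le_mul_of_one_le_right (norm_nonneg _)
    apply Real.one_le_exp
    have := hs k
    simp; positivity
  have hcomp2 : IsCompact (Metric.closedBall (0 : Fin n ⊕ Fin n → ℂ) 1 ×ˢ
      Metric.closedBall (0 : ℂ) B) := (isCompact_closedBall _ _).prod (isCompact_closedBall _ _)
  obtain ⟨⟨v', s'⟩, -, φ, hφ, hlim⟩ := hcomp2.tendsto_subseq (x := fun k => (v k, s k))
    (fun k => ⟨by simp [hv1 k], by simpa using hsB k⟩)
  have hvl : Tendsto (fun k => v (φ k)) atTop (nhds v') :=
    (continuous_fst.tendsto _).comp hlim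
  have hsl : Tendsto (fun k => s (φ k)) atTop (nhds s') :=
    (continuous_snd.tendsto _).comp hlim
  have hεl0 : Tendsto ε atTop (nhds 0) :=
    squeeze_zero (fun k => (hε k).le) hεk tendsto_one_div_add_atTop_nhds_zero_nat
  have hεl : Tendsto (fun k => ε (φ k)) atTop (nhds 0) := hεl0.comp hφ.tendsto_atTop
  have hexpl : Tendsto (fun k => Complex.exp (s (φ k) * τ)) atTop
      (nhds (Complex.exp (s' * τ))) :=
    (Complex.continuous_exp.tendsto _).comp (hsl.mul_const _)
  have hll := hsl.mul hexpl
  have hs' : 0 ≤ s'.re :=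
    ge_of_tendsto' ((Complex.continuous_re.tendsto _).comp hsl) (fun k => hs (φ k))
  have hv1' : ‖v'‖ = 1 :=
    tendsto_nhds_unique ((continuous_norm.tendsto _).comp hvl)
      (by simp only [Function.comp_def, hv1]; exact tendsto_const_nhds)
  have heig : MmatC n E 0 *ᵥ v' = (s' * Complex.exp (s' * τ)) • v' := by
    refine tendsto_nhds_unique (((MmatC_cont n E).tendsto (0, v')).comp (hεl.prodMk_nhds hvl)) ?_
    have := hll.smul hvl
    refine this.congr fun k => ?_
    exact (hv (φ k)).symm
  have hvne : v' ≠ 0 := by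
    rintro rfl; simp at hv1'
  by_cases hl : s' * Complex.exp (s' * τ) = 0
  swap
  · exact h0 _ ((root_iff_eig _ _).2 ⟨v', hvne, heig⟩) hl s' hs' rfl
  have hs0 : s' = 0 := by simpa using hl
  obtain ⟨w, hw, hwe⟩ := perron hn E hsc
  obtain ⟨p, hp, hpe⟩ := perron_out hn E hsc
  have hne : Nonempty (Fin n) := ⟨⟨0, hn⟩⟩
  rw [hl, zero_smul] at heig
  have h1 : ∀ i, - ∑ j, (adjM n E i j : ℂ) * (v' (Sum.inl i) - v' (Sum.inl j)) = 0 := fun i => by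
    have := congrFun heig (Sum.inl i)
    rw [MmatC_inl] at this
    simpa using this
  have h2 : ∀ i, ∑ j, (adjM n E i j : ℂ) * (v' (Sum.inl i) - v' (Sum.inl j))
      - ((degOut n E i : ℂ) * v' (Sum.inr i) - ∑ j, (adjM n E i j : ℂ) * v' (Sum.inr j)) = 0 :=
    fun i => by
      have := congrFun heig (Sum.inr i)
      rw [MmatC_inr] at this
      simpa using this
  obtain ⟨c, hc⟩ := max_principleC hsc (adjM n E) (adjM_nonneg n E) (fun i j h => adjM_pos n E h)
    (fun i => v' (Sum.inl i)) (fun i => by linear_combination -(h1 i))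
  obtain ⟨d, hd⟩ := out_ker E hsc p hp hpe (fun i => v' (Sum.inr i)) (fun i => by
    linear_combination -(h1 i) - h2 i)
  have hsumk : ∀ k, ∑ i, v k i = 0 := by
    intro k
    have h3 := MmatC_sum n E (ε k) (v k)
    rw [hv k] at h3
    simp only [Pi.smul_apply, smul_eq_mul, ← Finset.mul_sum] at h3
    exact (mul_eq_zero.1 h3).resolve_left (hl0 k)
  have hsum : ∑ i, v' i = 0 := by
    have h3 : Tendsto (fun k => ∑ i, v (φ k) i) atTop (nhds (∑ i, v' i)) :=
      tendsto_finsetSum _ fun i _ => (tendsto_pi_nhds.1 hvl) i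
    simp only [hsumk] at h3
    exact tendsto_nhds_unique h3 tendsto_const_nhds |> fun h => h
  have hP : (0:ℝ) < ∑ i, p i := Finset.sum_pos (fun i _ => hp i) Finset.univ_nonempty
  have hW : (0:ℝ) < ∑ i, w i := Finset.sum_pos (fun i _ => hw i) Finset.univ_nonempty
  have hWP : (0:ℝ) < ∑ i, w i * p i :=
    Finset.sum_pos (fun i _ => mul_pos (hw i) (hp i)) Finset.univ_nonempty
  set P : ℝ := ∑ i, p i with hPdef
  set W : ℝ := ∑ i, w i with hWdef
  set Q : ℝ := ∑ i, w i * p i with hQdef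
  have hPC : (P : ℂ) ≠ 0 := by exact_mod_cast hP.ne'
  have hWC : (W : ℂ) ≠ 0 := by exact_mod_cast hW.ne'
  have hcd : (n : ℂ) * c + d * P = 0 := by
    rw [Fintype.sum_sum_type] at hsum
    have e1 : ∑ i, v' (Sum.inl i) = n * c := by
      rw [Finset.sum_congr rfl fun i _ => hc i]; simp
    have e2 : ∑ i, v' (Sum.inr i) = d * P := by
      rw [Finset.sum_congr rfl fun i _ => hd i, ← Finset.mul_sum, hPdef]; push_cast; rfl
    rw [e1, e2] at hsum
    exact hsum
  have hc0 : c ≠ 0 := by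
    intro hc0
    rw [hc0, mul_zero, zero_add] at hcd
    have hd0 : d = 0 := (mul_eq_zero.1 hcd).resolve_right hPC
    apply hvne
    funext k
    rcases k with i | i
    · rw [hc i, hc0]; rfl
    · have := hd i
      simp only [hd0, zero_mul] at this
      rw [this]; rfl
  -- weighted sums
  have hXl : Tendsto (fun k => ∑ i, (w i : ℂ) * v (φ k) (Sum.inl i)) atTop (nhds (c * W)) := by
    have h3 : Tendsto (fun k => ∑ i, (w i : ℂ) * v (φ k) (Sum.inl i)) atTop
        (nhds (∑ i, (w i : ℂ) * v' (Sum.inl i))) :=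
      tendsto_finsetSum _ fun i _ => ((tendsto_pi_nhds.1 hvl) (Sum.inl i)).const_mul _
    have e1 : ∑ i, (w i : ℂ) * v' (Sum.inl i) = c * W := by
      rw [hWdef]; push_cast
      rw [Finset.mul_sum]
      exact Finset.sum_congr rfl fun i _ => by rw [hc i]; ring
    rwa [e1] at h3
  have hZl : Tendsto (fun k => ∑ i, (w i : ℂ) * v (φ k) (Sum.inr i)) atTop (nhds (d * Q)) := by
    have h3 : Tendsto (fun k => ∑ i, (w i : ℂ) * v (φ k) (Sum.inr i)) atTop
        (nhds (∑ i, (w i : ℂ) * v' (Sum.inr i))) :=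
      tendsto_finsetSum _ fun i _ => ((tendsto_pi_nhds.1 hvl) (Sum.inr i)).const_mul _
    have e1 : ∑ i, (w i : ℂ) * v' (Sum.inr i) = d * Q := by
      rw [hQdef]; push_cast
      rw [Finset.mul_sum]
      exact Finset.sum_congr rfl fun i _ => by rw [hd i]; ring
    rwa [e1] at h3
  have hrel : ∀ k, (ε k : ℂ) * ∑ i, (w i : ℂ) * v k (Sum.inr i)
      = s k * Complex.exp (s k * τ) * ∑ i, (w i : ℂ) * v k (Sum.inl i) := by
    intro k
    have h3 : ∀ i, - ∑ j, (adjM n E i j : ℂ) * (v k (Sum.inl i) - v k (Sum.inl j))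
        + ε k * v k (Sum.inr i) = s k * Complex.exp (s k * τ) * v k (Sum.inl i) := fun i => by
      rw [← MmatC_inl, hv k]; rfl
    have h4 := perron_sum E w hwe (fun i => v k (Sum.inl i))
    have h5 : ∑ i, (w i : ℂ) * (- ∑ j, (adjM n E i j : ℂ) * (v k (Sum.inl i) - v k (Sum.inl j))
        + ε k * v k (Sum.inr i)) = ∑ i, (w i : ℂ) * (s k * Complex.exp (s k * τ) * v k (Sum.inl i)) :=
      Finset.sum_congr rfl fun i _ => by rw [h3 i]
    simp only [mul_add, mul_neg, Finset.sum_add_distrib, Finset.sum_neg_distrib] at h5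
    rw [h4, neg_zero, zero_add] at h5
    rw [Finset.mul_sum, Finset.mul_sum]
    calc _ = ∑ i, (w i : ℂ) * (ε k * v k (Sum.inr i)) := Finset.sum_congr rfl fun i _ => by ring
      _ = _ := h5
      _ = _ := Finset.sum_congr rfl fun i _ => by ring
  set X : ℕ → ℂ := fun k => ∑ i, (w i : ℂ) * v (φ k) (Sum.inl i) with hX
  set Z : ℕ → ℂ := fun k => ∑ i, (w i : ℂ) * v (φ k) (Sum.inr i) with hZ
  have hX0 : c * (W:ℂ) ≠ 0 := mul_ne_zero hc0 hWC
  have hXE : Tendsto (fun k => X k * Complex.exp (s (φ k) * τ)) atTop (nhds (c * W)) := by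
    have := hXl.mul hexpl
    rw [hs0] at this
    simpa using this
  have hu := hZl.div hXE hX0
  have hval : d * (Q:ℂ) / (c * W) = ((-(n * Q / (P * W)) : ℝ) : ℂ) := by
    push_cast
    rw [div_eq_iff hX0]
    field_simp
    linear_combination (Q:ℂ) * hcd
  rw [hval] at hu
  have hure := (Complex.continuous_re.tendsto _).comp hu
  have hneg : ((-(n * Q / (P * W)) : ℝ) : ℂ).re < 0 := by
    rw [Complex.ofReal_re]
    have : (0:ℝ) < n := by exact_mod_cast hn
    have : 0 < n * Q / (P * W) := by positivity
    linarith
  obtain ⟨k, hk1, hk2⟩ := ((hure.eventually (gt_mem_nhds hneg)).and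
    (hXE.eventually_ne hX0)).exists
  have h3 : s (φ k) = (ε (φ k) : ℂ) * (Z k / (X k * Complex.exp (s (φ k) * τ))) := by
    rw [← mul_div_assoc, eq_div_iff hk2]
    have := hrel (φ k)
    simp only [hX, hZ]
    rw [this]; ring
  have h4 : (s (φ k)).re = ε (φ k) * (Z k / (X k * Complex.exp (s (φ k) * τ))).re := by
    conv_lhs => rw [h3]
    rw [Complex.re_ofReal_mul]
  have h5 := hs (φ k)
  rw [h4] at h5
  have h6 : (Z k / (X k * Complex.exp (s (φ k) * τ))).re < 0 := hk1
  have := mul_neg_of_pos_of_neg (hε (φ k)) h6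
  linarith

/-- Theorem 2: `G` strongly connected, `δ̄` the largest in/out degree,
`r` the largest real part among nonzero eigenvalues of `M(0)`, and
`τ̃ = (1/(2δ̄))·arctan(−r/δ̄)`.  For every delay `0 < τ < τ̃` there is `ε̃ > 0` such that
for all `ε ∈ (0, ε̃]`, every solution of `ẏ(t) = M(ε)y(t−τ)` with constant initial
condition `y(θ) = (x₀, 0)` on `[−τ, 0]` has its `x`-component converge to the average
of `x₀`. -/
theorem stmt2 (n : ℕ) (E : Fin n → Fin n → Prop) [DecidableRel E]
    (hloop : ∀ i, ¬ E i i) (hsc : StronglyConnected n E)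
    (δbar : ℝ)
    (hδ : IsGreatest {d : ℝ | ∃ i : Fin n, d = max (degIn n E i) (degOut n E i)} δbar)
    (r : ℝ)
    (hr : IsGreatest {x : ℝ | ∃ μ : ℂ, (MmatC n E 0).charpoly.IsRoot μ ∧ μ ≠ 0 ∧
        x = μ.re} r)
    (τ : ℝ) (hτpos : 0 < τ)
    (hτ : τ < (1 / (2 * δbar)) * Real.arctan ((-r) / δbar)) :
    ∃ εtilde : ℝ, 0 < εtilde ∧ ∀ ε : ℝ, 0 < ε → ε ≤ εtilde →
      ∀ (y : ℝ → (Fin n ⊕ Fin n → ℝ)) (x₀ : Fin n → ℝ),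
        ContinuousOn y (Set.Ici (-τ)) →
        (∀ t : ℝ, 0 < t → HasDerivAt y ((Mmat n E ε).mulVec (y (t - τ))) t) →
        (∀ θ ∈ Set.Icc (-τ) (0 : ℝ), y θ = Sum.elim x₀ 0) →
        Filter.Tendsto (fun t : ℝ => fun i : Fin n => y t (Sum.inl i))
          Filter.atTop (nhds (fun _ : Fin n => (∑ j, x₀ j) / (n : ℝ))) := by
  have hn : 0 < n := by
    obtain ⟨i, -⟩ := hδ.1
    exact i.pos
  have hδ2 : ∀ i, degIn n E i ≤ δbar ∧ degOut n E i ≤ δbar := fun i => by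
    have h := hδ.2 ⟨i, rfl⟩
    exact ⟨(le_max_left _ _).trans h, (le_max_right _ _).trans h⟩
  have hbd : ∀ l : ℂ, (MmatC n E 0).charpoly.IsRoot l → l ≠ 0 →
      0 < δbar ∧ l.re < 0 ∧ ‖l‖ ≤ 2 * δbar ∧ |l.im| ≤ δbar := by
    intro l hl hl0
    obtain ⟨v, hv0, hv⟩ := (root_iff_eig _ _).1 hl
    obtain ⟨d, hd, hld⟩ := gersh E δbar hδ2 l v hv0 hv
    exact gersh_bounds l hl0 d δbar hd hld
  obtain ⟨μ, hμ, hμ0, hrμ⟩ := hr.1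
  have hr0 : r < 0 := by rw [hrμ]; exact (hbd μ hμ hμ0).2.1
  have hδ0 : 0 < δbar := (hbd μ hμ hμ0).1
  obtain ⟨e, he, hstab⟩ := spectral_perturb hn E hsc τ hτpos (by
    intro l hl hl0 s hs hls
    obtain ⟨-, -, h1, h2⟩ := hbd l hl hl0
    exact stable_zero l δbar r τ hτpos hδ0 hr0 (hr.2 ⟨l, hl, hl0, rfl⟩) h1 h2 hτ s hs hls)
  refine ⟨e, he, fun ε hε hεe y x₀ hy hd hinit => ?_⟩
  set c : ℝ := (∑ j, x₀ j) / (n : ℝ) with hc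
  have hnR : (n : ℝ) ≠ 0 := by exact_mod_cast hn.ne'
  let b : Fin n ⊕ Fin n → ℝ := Sum.elim (fun _ => c) 0
  let J : (Fin n ⊕ Fin n → ℝ) →L[ℝ] (Fin n ⊕ Fin n → ℂ) :=
    ContinuousLinearMap.pi fun k => Complex.ofRealCLM.comp (ContinuousLinearMap.proj k)
  have hJ : ∀ v k, J v k = (v k : ℂ) := fun v k => rfl
  have hJM : ∀ v, J (Mmat n E ε *ᵥ v) = MmatC n E ε *ᵥ J v := by
    intro v
    funext k
    rw [hJ]
    simp [Matrix.mulVec, dotProduct, MmatC, hJ]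
  have hMb : MmatC n E ε *ᵥ J b = 0 := by
    funext k
    rcases k with i | i
    · rw [MmatC_inl]; simp [hJ, b]
    · rw [MmatC_inr]; simp [hJ, b]
  let u : ℝ → Fin n ⊕ Fin n → ℂ := fun t => J (y t) - J b
  have hucont : ContinuousOn u (Set.Ici (-τ)) :=
    (J.continuous.comp_continuousOn hy).sub continuousOn_const
  have hud : ∀ t, 0 < t → HasDerivAt u (MmatC n E ε *ᵥ u (t - τ)) t := by
    intro t ht
    have h1 : HasDerivAt u (J (Mmat n E ε *ᵥ y (t - τ))) t :=
      (J.hasFDerivAt.comp_hasDerivAt t (hd t ht)).sub_const _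
    refine h1.congr_deriv ?_
    simp only [u]
    rw [hJM, Matrix.mulVec_sub, hMb, sub_zero]
  have hinit0 : ∀ t ∈ Set.Icc (-τ) (0:ℝ), ∑ k, u t k = 0 := by
    intro t ht
    simp only [u]
    rw [hinit t ht]
    simp only [Fintype.sum_sum_type, Pi.sub_apply, hJ, b, Sum.elim_inl, Sum.elim_inr]
    simp
    rw [hc]
    push_cast
    have : (n : ℂ) ≠ 0 := by exact_mod_cast hn.ne'
    field_simp
    ring
  have husum : ∀ t, -τ ≤ t → ∑ k, u t k = 0 := by
    intro t ht
    rcases le_total t 0 with h | h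
    · exact hinit0 t ⟨ht, h⟩
    · have hcs : ContinuousOn (fun t => ∑ k, u t k) (Set.Icc 0 t) := by
        refine continuousOn_finsetSum _ fun k _ => ?_
        refine ((continuous_apply k).comp_continuousOn hucont).mono ?_
        intro x hx
        simp only [Set.mem_Ici]
        linarith [hx.1]
      have hds : ∀ x ∈ Set.Ioo 0 t, HasDerivAt (fun t => ∑ k, u t k) 0 x := by
        intro x hx
        have h1 : HasDerivAt (fun t => ∑ k, u t k) (∑ k, (MmatC n E ε *ᵥ u (x - τ)) k) x :=
          HasDerivAt.fun_sum fun k _ => (hasDerivAt_pi.1 (hud x hx.1)) k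
        rwa [MmatC_sum] at h1
      have heq : ∑ k, u t k = ∑ k, u 0 k := by
        rcases h.eq_or_lt with h0 | h0
        · rw [← h0]
        · have hftc := intervalIntegral.integral_eq_sub_of_hasDerivAt_of_le h hcs hds
            (by simp)
          simp at hftc
          have := sub_eq_zero.1 hftc.symm
          rw [Fintype.sum_sum_type, Fintype.sum_sum_type]; exact this
      rw [heq]
      exact hinit0 0 ⟨by linarith, le_refl _⟩
  have hlim := dd_main (MmatC n E ε) τ hτpos (MmatC_sum n E ε)
    (fun v hv hs => MmatC_ker hn E hsc ε hε v hv hs) (by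
      intro l hl hl0 s hs hsl
      apply hstab ε hε hεe l hl hl0 s hs
      have h1 : Complex.exp (-(s * τ)) * Complex.exp (s * τ) = 1 := by
        rw [← Complex.exp_add]; simp
      calc l = l * (Complex.exp (-(s * τ)) * Complex.exp (s * τ)) := by rw [h1, mul_one]
        _ = (l * Complex.exp (-(s * τ))) * Complex.exp (s * τ) := by ring
        _ = s * Complex.exp (s * τ) := by rw [← hsl]) u hucont hud husum
  rw [tendsto_pi_nhds]
  intro i
  have h1 := (tendsto_pi_nhds.1 hlim) (Sum.inl i)
  have h2 := ((Complex.continuous_re.tendsto _).comp h1).add_const c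
  have h3 : (0 : Fin n ⊕ Fin n → ℂ) (Sum.inl i) = 0 := rfl
  rw [h3, Complex.zero_re, zero_add] at h2
  refine h2.congr fun t => ?_
  simp [u, hJ, b]
end
end

section
/- Let R > 0 and θ ∈ (π/2, π], and consider the set T = { τ > 0 : there exists ω ∈ ℝ with iω·e^{iωτ} = R·e^{iθ} }. Then T is nonempty, (θ − π/2)/R ∈ T (attained with ω = R), and (θ − π/2)/R = min T, i.e. (θ − π/2)/R is the smallest positive delay for which the equation s·e^{sτ} = R·e^{iθ} admits a purely imaginary solution. -/
open Complex Real

/-- for `R > 0` and `θ ∈ (π/2, π]`, the set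
`T = {τ > 0 : ∃ ω ∈ ℝ, iω·e^{iωτ} = R·e^{iθ}}` has least element `(θ − π/2)/R`,
attained with `ω = R`. -/
theorem stmt13 (R θ : ℝ) (hR : 0 < R) (hθ : θ ∈ Set.Ioc (Real.pi / 2) Real.pi) :
    IsLeast {τ : ℝ | 0 < τ ∧ ∃ ω : ℝ,
        Complex.I * (ω : ℂ) * Complex.exp (Complex.I * (ω : ℂ) * (τ : ℂ)) =
          (R : ℂ) * Complex.exp (Complex.I * (θ : ℂ))}
      ((θ - Real.pi / 2) / R) ∧
    Complex.I * (R : ℂ) * Complex.exp (Complex.I * (R : ℂ) * (((θ - Real.pi / 2) / R : ℝ) : ℂ)) =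
      (R : ℂ) * Complex.exp (Complex.I * (θ : ℂ)) := by
  obtain ⟨h1, h2⟩ := hθ
  have key : Complex.I * (R : ℂ) *
      Complex.exp (Complex.I * (R : ℂ) * (((θ - Real.pi / 2) / R : ℝ) : ℂ)) =
      (R : ℂ) * Complex.exp (Complex.I * (θ : ℂ)) := by
    have hRc : (R : ℂ) ≠ 0 := by exact_mod_cast hR.ne'
    have e : Complex.I * (R : ℂ) * (((θ - Real.pi / 2) / R : ℝ) : ℂ)
        = Complex.I * (θ : ℂ) - (Real.pi : ℂ) / 2 * Complex.I := by
      push_cast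
      field_simp
    rw [e, Complex.exp_sub, Complex.exp_pi_div_two_mul_I]
    field_simp
  refine ⟨⟨⟨div_pos (by linarith) hR, R, key⟩, ?_⟩, key⟩
  rintro τ ⟨hτ, ω, h⟩
  have e1 : Complex.I * (ω : ℂ) * (τ : ℂ) = ((ω * τ : ℝ) : ℂ) * Complex.I := by
    push_cast; ring
  rw [e1, mul_comm Complex.I (θ : ℂ), Complex.exp_mul_I, Complex.exp_mul_I,
    ← Complex.ofReal_cos, ← Complex.ofReal_sin, ← Complex.ofReal_cos, ← Complex.ofReal_sin] at h
  have hre := congrArg Complex.re h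
  have him := congrArg Complex.im h
  simp only [Complex.mul_re, Complex.mul_im, Complex.add_re, Complex.add_im, Complex.I_re,
    Complex.I_im, Complex.ofReal_re, Complex.ofReal_im] at hre him
  ring_nf at hre him
  have hsq : ω ^ 2 = R ^ 2 := by
    have a := Real.sin_sq_add_cos_sq (ω * τ)
    have b := Real.sin_sq_add_cos_sq θ
    linear_combination (-ω ^ 2) * a + R ^ 2 * b
      + (-(ω * Real.sin (ω * τ)) + R * Real.cos θ) * hre
      + (ω * Real.cos (ω * τ) + R * Real.sin θ) * him
  rw [div_le_iff₀ hR]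
  by_contra hlt
  push Not at hlt
  have hx : 0 < R * τ := mul_pos hR hτ
  have hcos : Real.cos (θ - Real.pi / 2) < Real.cos (R * τ) :=
    Real.cos_lt_cos_of_nonneg_of_le_pi_div_two hx.le (by linarith) (by linarith)
  rw [Real.cos_sub_pi_div_two] at hcos
  have hs : 0 ≤ Real.sin θ := Real.sin_nonneg_of_nonneg_of_le_pi (by linarith) h2
  rcases sq_eq_sq_iff_eq_or_eq_neg.mp hsq with rfl | rfl
  · have := mul_left_cancel₀ hR.ne' him
    linarith
  · rw [neg_mul, neg_mul, Real.cos_neg] at him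
    nlinarith
end
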